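/- arXiv:1110.0870 — 2 statements merged into one kernel-verified Lean document; each statement's English description precedes it below -/
import Mathlib

section
/- For x > 0 and integers n > m ≥ 0 with n - m odd: 0 < -i·Pₙᵐ(ix)/P_{n-1}ᵐ(ix) < (n/(n-m))·(x + sqrt(1 + x² - m²/n²)); and if n - m is even: (1/(n-m))·(n x + (n-1) sqrt(1 + x² - m²/(n-1)²)) < -i·Pₙᵐ(ix)/P_{n-1}ᵐ(ix). -/
open Complex

/-- The Legendre polynomials (as functions on `ℂ`):
`P₀ = 1`, `P₁(z) = z`, `(n+2) P_{n+2}(z) = (2n+3) z P_{n+1}(z) - (n+1) Pₙ(z)`. -/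
noncomputable def legendrePoly : ℕ → ℂ → ℂ
  | 0, _ => 1
  | 1, z => z
  | n + 2, z =>
      ((2 * (n : ℂ) + 3) * z * legendrePoly (n + 1) z -
        ((n : ℂ) + 1) * legendrePoly n z) / ((n : ℂ) + 2)

/-- The associated Legendre function of the first kind of integer degree `n`
and order `m` (cut plane / DLMF convention):
`Pₙᵐ(z) = (z² - 1)^{m/2} dᵐPₙ/dzᵐ(z)`. -/
noncomputable def assocLegendreP (n m : ℕ) (z : ℂ) : ℂ :=
  (z ^ 2 - 1) ^ ((m : ℂ) / 2) * iteratedDeriv m (legendrePoly n) z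

open Polynomial in
/-- Real version `p_n(x) = i^{-n} P_n(ix)`. -/
noncomputable def oblR : ℕ → ℝ[X]
  | 0 => 1
  | 1 => X
  | n + 2 => C (((n : ℝ) + 2)⁻¹) * (C (2 * (n : ℝ) + 3) * (X * oblR (n + 1)) + C ((n : ℝ) + 1) * oblR n)

open Polynomial in
/-- Complex Legendre polynomials as polynomials. -/
noncomputable def oblL : ℕ → ℂ[X]
  | 0 => 1
  | 1 => X
  | n + 2 => C (((n : ℂ) + 2)⁻¹) * (C (2 * (n : ℂ) + 3) * (X * oblL (n + 1)) - C ((n : ℂ) + 1) * oblL n)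

theorem oblL_eval (n : ℕ) (z : ℂ) : (oblL n).eval z = legendrePoly n z := by
  induction n using Nat.strong_induction_on with
  | _ n ih =>
    match n with
    | 0 => simp [oblL, legendrePoly]
    | 1 => simp [oblL, legendrePoly]
    | n + 2 =>
      simp only [oblL, legendrePoly, Polynomial.eval_mul, Polynomial.eval_sub, Polynomial.eval_C,
        Polynomial.eval_X, ih n (by omega), ih (n + 1) (by omega)]
      ring

theorem obl_iter (m : ℕ) (p : Polynomial ℂ) (z : ℂ) :
    iteratedDeriv m (fun z => p.eval z) z = (Polynomial.derivative^[m] p).eval z := by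
  induction m generalizing z with
  | zero => simp
  | succ m ih =>
    rw [iteratedDeriv_succ, funext ih, Polynomial.deriv, Function.iterate_succ_apply']

open Polynomial in
/-- The `m`-th derivative of `oblR n`. -/
noncomputable def oblQ (n m : ℕ) : ℝ[X] := derivative^[m] (oblR n)

theorem obl_iter_add {R : Type*} [CommRing R] (m : ℕ) (p q : Polynomial R) :
    Polynomial.derivative^[m] (p + q) = Polynomial.derivative^[m] p + Polynomial.derivative^[m] q :=
  iterate_map_add Polynomial.derivative m p q

theorem obl_iter_X_mul {R : Type*} [CommRing R] (m : ℕ) (p : Polynomial R) :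
    Polynomial.derivative^[m] (Polynomial.X * p) =
      Polynomial.X * Polynomial.derivative^[m] p + m • Polynomial.derivative^[m - 1] p := by
  rw [mul_comm, Polynomial.iterate_derivative_mul_X, mul_comm]

theorem obl_link (n m : ℕ) (x : ℝ) :
    (Polynomial.derivative^[m] (oblL n)).eval (Complex.I * x) * Complex.I ^ m =
      Complex.I ^ n * (((oblQ n m).eval x : ℝ) : ℂ) := by
  unfold oblQ
  induction n using Nat.strong_induction_on generalizing m with
  | _ n ih =>
    match n with
    | 0 =>
      cases m with
      | zero => simp [oblL, oblR]
      | succ m => simp [oblL, oblR]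
    | 1 =>
      match m with
      | 0 => simp [oblL, oblR]
      | 1 => simp [oblL, oblR]
      | m + 2 => simp [oblL, oblR]
    | n + 2 =>
      have h0 := ih n (by omega) m
      have h1 := ih (n + 1) (by omega) m
      have h2 := ih (n + 1) (by omega) (m - 1)
      have h3 : (m : ℂ) * (Polynomial.derivative^[m - 1] (oblL (n + 1))).eval (Complex.I * x) * Complex.I ^ m =
          m * (Complex.I * (Complex.I ^ (n + 1) *
          (((Polynomial.derivative^[m - 1] (oblR (n + 1))).eval x : ℝ) : ℂ))) := by
        rw [← h2]
        cases m with
        | zero => simp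
        | succ m => simp only [Nat.add_sub_cancel]; ring
      simp only [oblL, oblR, Polynomial.iterate_derivative_C_mul, Polynomial.iterate_derivative_sub,
        obl_iter_add, obl_iter_X_mul, Polynomial.eval_mul,
        Polynomial.eval_sub, Polynomial.eval_add, Polynomial.eval_C, Polynomial.eval_X,
        nsmul_eq_mul, Polynomial.eval_natCast]
      push_cast
      linear_combination ((n : ℂ) + 2)⁻¹ * ((2 * (n : ℂ) + 3) * (Complex.I * x * h1 + h3) - ((n : ℂ) + 1) * h0)
        - ((n : ℂ) + 2)⁻¹ * ((n : ℂ) + 1) * Complex.I ^ n * (((Polynomial.derivative^[m] (oblR n)).eval x : ℝ) : ℂ) * Complex.I_sq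

open Polynomial in
theorem oblR_rec (n : ℕ) : C ((n : ℝ) + 2) * oblR (n + 2) =
    C (2 * (n : ℝ) + 3) * (X * oblR (n + 1)) + C ((n : ℝ) + 1) * oblR n := by
  have : (n : ℝ) + 2 ≠ 0 := by positivity
  rw [oblR, ← mul_assoc, ← C_mul, mul_inv_cancel₀ this, C_1, one_mul]

open Polynomial in
theorem oblR_AB (n : ℕ) :
    derivative (oblR (n + 1)) = C ((n : ℝ) + 1) * oblR n + X * derivative (oblR n) ∧
    X * derivative (oblR (n + 1)) + derivative (oblR n) = C ((n : ℝ) + 1) * oblR (n + 1) := by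
  induction n with
  | zero => simp [oblR]
  | succ n ih =>
    obtain ⟨hA, hB⟩ := ih
    have hr := oblR_rec n
    have hd := congrArg derivative hr
    simp only [derivative_mul, derivative_add, derivative_C, derivative_X] at hd
    have hne : C ((n : ℝ) + 2) ≠ 0 := by
      rw [Ne, C_eq_zero]; positivity
    have hA' : derivative (oblR (n + 2)) = C ((n : ℝ) + 2) * oblR (n + 1) + X * derivative (oblR (n + 1)) := by
      apply mul_left_cancel₀ hne
      simp only [C_add, C_mul] at *
      simp only [map_ofNat, map_one] at *
      linear_combination hd + (C (n : ℝ) + 1) * hB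
    have e : ((n + 1 : ℕ) : ℝ) + 1 = (n : ℝ) + 2 := by push_cast; ring
    rw [e]
    refine ⟨hA', ?_⟩
    rw [show n + 1 + 1 = n + 2 from rfl, hr, hA']
    simp only [C_add, C_mul] at *
    simp only [map_ofNat, map_one] at *
    linear_combination X * hB + hA

theorem oblQ_succ (n m : ℕ) : oblQ n (m + 1) = Polynomial.derivative (oblQ n m) := by
  simp [oblQ, Function.iterate_succ_apply']

open Polynomial in
theorem oblQ_AB (n m : ℕ) :
    derivative (oblQ (n + 1) m) = C ((n : ℝ) + 1 + m) * oblQ n m + X * derivative (oblQ n m) ∧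
    X * derivative (oblQ (n + 1) m) + derivative (oblQ n m) = C ((n : ℝ) + 1 - m) * oblQ (n + 1) m := by
  induction m with
  | zero => simpa [oblQ] using oblR_AB n
  | succ m ih =>
    obtain ⟨hA, hB⟩ := ih
    have hA' := congrArg derivative hA
    have hB' := congrArg derivative hB
    simp only [derivative_mul, derivative_add, derivative_C, derivative_X] at hA' hB'
    simp only [oblQ_succ]
    push_cast
    simp only [C_add, C_sub, C_1] at *
    exact ⟨by linear_combination hA', by linear_combination hB'⟩

theorem obl_A (n m : ℕ) (x : ℝ) : (oblQ (n + 1) (m + 1)).eval x =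
    ((n : ℝ) + 1 + m) * (oblQ n m).eval x + x * (oblQ n (m + 1)).eval x := by
  have := congrArg (Polynomial.eval x) (oblQ_AB n m).1
  simpa [oblQ_succ] using this

theorem obl_B (n m : ℕ) (x : ℝ) : x * (oblQ (n + 1) (m + 1)).eval x + (oblQ n (m + 1)).eval x =
    ((n : ℝ) + 1 - m) * (oblQ (n + 1) m).eval x := by
  have := congrArg (Polynomial.eval x) (oblQ_AB n m).2
  simpa [oblQ_succ] using this

theorem obl_R0 (n : ℕ) (x : ℝ) : ((n : ℝ) + 2) * (oblQ (n + 2) 0).eval x =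
    (2 * (n : ℝ) + 3) * (x * (oblQ (n + 1) 0).eval x) + ((n : ℝ) + 1) * (oblQ n 0).eval x := by
  have := congrArg (Polynomial.eval x) (oblR_rec n)
  simpa only [oblQ, Function.iterate_zero, id, Polynomial.eval_mul, Polynomial.eval_add,
    Polynomial.eval_C, Polynomial.eval_X] using this

theorem obl_pos (x : ℝ) (hx : 0 < x) (n m : ℕ) :
    0 ≤ (oblQ n m).eval x ∧ (m ≤ n → 0 < (oblQ n m).eval x) := by
  induction n using Nat.strong_induction_on generalizing m with
  | _ n ih =>
    match n, m with
    | 0, 0 => simp [oblQ, oblR]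
    | 0, m + 1 => simp [oblQ, oblR]
    | 1, 0 => simp [oblQ, oblR, hx, hx.le]
    | n + 2, 0 =>
      have h1 := (ih n (by omega) 0).2 (by omega)
      have h2 := (ih (n + 1) (by omega) 0).2 (by omega)
      have h3 := obl_R0 n x
      have h4 : 0 < ((n : ℝ) + 2) * (oblQ (n + 2) 0).eval x := by rw [h3]; positivity
      have h5 := (mul_pos_iff_of_pos_left (by positivity : 0 < (n : ℝ) + 2)).1 h4
      exact ⟨h5.le, fun _ => h5⟩
    | n + 1, m + 1 =>
      have h1 := ih n (by omega) m
      have h2 := (ih n (by omega) (m + 1)).1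
      rw [obl_A]
      have h3 := h1.1
      refine ⟨by positivity, fun h => ?_⟩
      have h4 := h1.2 (by omega)
      positivity

theorem obl_zero (n m : ℕ) (h : Odd (n + m)) : (oblQ n m).eval 0 = 0 := by
  induction n using Nat.strong_induction_on generalizing m with
  | _ n ih =>
    match n, m with
    | 0, 0 => simp at h
    | 0, m + 1 => simp [oblQ, oblR]
    | 1, 0 => simp [oblQ, oblR]
    | n + 2, 0 =>
      have h1 := ih n (by omega) 0 (by grind)
      have h3 := obl_R0 n 0
      rw [h1] at h3
      have : (n : ℝ) + 2 ≠ 0 := by positivity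
      simpa [this] using h3
    | n + 1, m + 1 =>
      rw [obl_A, ih n (by omega) m (by grind)]
      simp

theorem obl_key (k m : ℕ) (hm : m ≤ k) (ho : Odd (k + 1 + m)) (x : ℝ) (hx : 0 < x) :
    0 < ((k : ℝ) + 1 + m) * (oblQ k m).eval x ^ 2
      + 2 * ((k : ℝ) + 1) * x * (oblQ (k + 1) m).eval x * (oblQ k m).eval x
      - ((k : ℝ) + 1 - m) * (oblQ (k + 1) m).eval x ^ 2 := by
  set D : ℝ → ℝ := fun x => ((k : ℝ) + 1 + m) * (oblQ k m).eval x ^ 2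
      + 2 * ((k : ℝ) + 1) * x * (oblQ (k + 1) m).eval x * (oblQ k m).eval x
      - ((k : ℝ) + 1 - m) * (oblQ (k + 1) m).eval x ^ 2 with hD
  have hder : ∀ y : ℝ, HasDerivAt (fun x => (1 + x ^ 2) ^ m * D x)
      ((1 + y ^ 2) ^ m * (2 * ((k : ℝ) + 1) * (oblQ (k + 1) m).eval y * (oblQ k m).eval y)) y := by
    intro y
    have d1 : HasDerivAt (fun x => (oblQ (k + 1) m).eval x) ((oblQ (k + 1) (m + 1)).eval y) y := by
      rw [oblQ_succ]; exact Polynomial.hasDerivAt _ _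
    have d0 : HasDerivAt (fun x => (oblQ k m).eval x) ((oblQ k (m + 1)).eval y) y := by
      rw [oblQ_succ]; exact Polynomial.hasDerivAt _ _
    have dD := (((d0.pow 2).const_mul ((k : ℝ) + 1 + m)).add
      ((((hasDerivAt_id y).const_mul (2 * ((k : ℝ) + 1))).mul d1).mul d0)).sub
      ((d1.pow 2).const_mul ((k : ℝ) + 1 - m))
    have dw := (((hasDerivAt_id y).pow 2).const_add 1).pow m
    have dE := dw.mul dD
    have hA := obl_A k m y
    have hB := obl_B k m y
    refine dE.congr_deriv ?_
    simp only [Pi.add_apply, Pi.pow_apply, Pi.mul_apply, Pi.sub_apply, id]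
    have hw : (1 + y ^ 2) ≠ 0 := by positivity
    have ha : (oblQ (k + 1) (m + 1)).eval y = (((k : ℝ) + 1 + m) * (oblQ k m).eval y
        + y * (((k : ℝ) + 1 - m) * (oblQ (k + 1) m).eval y)) / (1 + y ^ 2) := by
      rw [eq_div_iff hw]; linear_combination hA + y * hB
    have hb : (oblQ k (m + 1)).eval y = (((k : ℝ) + 1 - m) * (oblQ (k + 1) m).eval y
        - y * (((k : ℝ) + 1 + m) * (oblQ k m).eval y)) / (1 + y ^ 2) := by
      rw [eq_div_iff hw]; linear_combination hB - y * hA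
    rw [ha, hb]
    have hp : (m : ℝ) * (1 + y ^ 2) ^ (m - 1) = m * (1 + y ^ 2) ^ m / (1 + y ^ 2) := by
      cases m with
      | zero => simp
      | succ m => simp only [Nat.add_sub_cancel]; field_simp; ring
    rw [hp]
    field_simp
    ring
  have hmono : StrictMonoOn (fun x => (1 + x ^ 2) ^ m * D x) (Set.Ici 0) := by
    apply strictMonoOn_of_deriv_pos (convex_Ici 0)
    · exact fun y _ => (hder y).continuousAt.continuousWithinAt
    · intro y hy
      rw [interior_Ici] at hy
      have hy' : 0 < y := hy
      rw [(hder y).deriv]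
      have h1 := (obl_pos y hy' k m).2 hm
      have h2 := (obl_pos y hy' (k + 1) m).2 (by omega)
      positivity
  have h := hmono (Set.mem_Ici.2 le_rfl) (Set.mem_Ici.2 hx.le) hx
  have h0 : 0 ≤ D 0 := by
    simp only [hD, obl_zero (k + 1) m ho]
    have : 0 ≤ ((k : ℝ) + 1 + m) * (oblQ k m).eval 0 ^ 2 := by positivity
    linarith
  have h1 : 0 < (1 + x ^ 2) ^ m * D x := lt_of_le_of_lt (by positivity) h
  exact (mul_pos_iff_of_pos_left (by positivity)).1 h1

theorem obl_ratio (k m : ℕ) (hm : m ≤ k) (x : ℝ) (hx : 0 < x) :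
    -Complex.I * assocLegendreP (k + 1) m (Complex.I * x) / assocLegendreP k m (Complex.I * x) =
      (((oblQ (k + 1) m).eval x / (oblQ k m).eval x : ℝ) : ℂ) := by
  have e : ∀ n, iteratedDeriv m (legendrePoly n) (Complex.I * x) =
      Complex.I ^ n * (((oblQ n m).eval x : ℝ) : ℂ) / Complex.I ^ m := by
    intro n
    rw [← obl_link, mul_div_cancel_right₀ _ (pow_ne_zero _ Complex.I_ne_zero), ← obl_iter]
    congr 1
    funext z
    exact (oblL_eval n z).symm
  have hz : (Complex.I * (x : ℂ)) ^ 2 - 1 ≠ 0 := by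
    have h1 : (Complex.I * (x : ℂ)) ^ 2 - 1 = ((-(x ^ 2 + 1) : ℝ) : ℂ) := by
      rw [mul_pow, Complex.I_sq]; push_cast; ring
    rw [h1, Complex.ofReal_ne_zero]
    nlinarith [sq_nonneg x]
  have hc : ((Complex.I * (x : ℂ)) ^ 2 - 1) ^ ((m : ℂ) / 2) ≠ 0 := by
    rw [Ne, Complex.cpow_eq_zero_iff]
    tauto
  have hq : (((oblQ k m).eval x : ℝ) : ℂ) ≠ 0 :=
    Complex.ofReal_ne_zero.2 ((obl_pos x hx k m).2 hm).ne'
  have hI := Complex.I_ne_zero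
  unfold assocLegendreP
  rw [e, e]
  push_cast
  generalize ((Complex.I * (x : ℂ)) ^ 2 - 1) ^ ((m : ℂ) / 2) = c at hc
  rw [pow_succ]
  field_simp
  rw [Complex.I_sq]
  ring

theorem obl_odd (k m : ℕ) (hm : m ≤ k) (ho : Odd (k + 1 + m)) (x : ℝ) (hx : 0 < x) :
    ((k : ℝ) + 1 - m) * ((oblQ (k + 1) m).eval x / (oblQ k m).eval x) <
      ((k : ℝ) + 1) * (x + Real.sqrt (1 + x ^ 2 - (m : ℝ) ^ 2 / ((k : ℝ) + 1) ^ 2)) := by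
  have hkey := obl_key k m hm ho x hx
  have hb := (obl_pos x hx k m).2 hm
  set a := (oblQ (k + 1) m).eval x
  set b := (oblQ k m).eval x
  have hmk : (m : ℝ) ≤ k := by exact_mod_cast hm
  have hm0 : (0 : ℝ) ≤ m := by positivity
  have hS : (m : ℝ) ^ 2 / ((k : ℝ) + 1) ^ 2 ≤ 1 := by
    rw [div_le_one (by positivity)]; gcongr; linarith
  have hs : Real.sqrt (1 + x ^ 2 - (m : ℝ) ^ 2 / ((k : ℝ) + 1) ^ 2) ^ 2 = _ :=
    Real.sq_sqrt (by nlinarith [sq_nonneg x])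
  have hs0 := Real.sqrt_nonneg (1 + x ^ 2 - (m : ℝ) ^ 2 / ((k : ℝ) + 1) ^ 2)
  set s := Real.sqrt (1 + x ^ 2 - (m : ℝ) ^ 2 / ((k : ℝ) + 1) ^ 2)
  have hT : (((k : ℝ) + 1) * s) ^ 2 = ((k : ℝ) + 1) ^ 2 * (1 + x ^ 2) - m ^ 2 := by
    rw [mul_pow, hs]; field_simp
  have h1 : (((k : ℝ) + 1 - m) * a - ((k : ℝ) + 1) * x * b) ^ 2 < (((k : ℝ) + 1) * s * b) ^ 2 := by
    rw [mul_pow _ b, hT]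
    have := mul_pos (by linarith : (0 : ℝ) < (k : ℝ) + 1 - m) hkey
    nlinarith
  have h2 := lt_of_pow_lt_pow_left₀ 2 (by positivity) h1
  rw [← mul_div_assoc, div_lt_iff₀ hb]
  linarith

theorem obl_rec (k m : ℕ) (x : ℝ) :
    ((k : ℝ) + 2 - m) * (oblQ (k + 2) m).eval x =
      (2 * ((k : ℝ) + 1) + 1) * x * (oblQ (k + 1) m).eval x + ((k : ℝ) + 1 + m) * (oblQ k m).eval x := by
  have h1 := obl_A k m x
  have h2 := obl_B k m x
  have h3 := obl_A (k + 1) m x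
  have h4 := obl_B (k + 1) m x
  push_cast at h3 h4
  simp only [show k + 1 + 1 = k + 2 from rfl] at h3 h4
  linear_combination -h4 + x * h3 + h1 + x * h2

theorem obl_even (k m : ℕ) (hm : m ≤ k) (ho : Odd (k + 1 + m)) (x : ℝ) (hx : 0 < x) :
    ((k : ℝ) + 2) * x + ((k : ℝ) + 1) * Real.sqrt (1 + x ^ 2 - (m : ℝ) ^ 2 / ((k : ℝ) + 1) ^ 2) <
    ((k : ℝ) + 2 - m) * ((oblQ (k + 2) m).eval x / (oblQ (k + 1) m).eval x) := by
  have hodd := obl_odd k m hm ho x hx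
  have hrec := obl_rec k m x
  have hb := (obl_pos x hx k m).2 hm
  have ha := (obl_pos x hx (k + 1) m).2 (by omega)
  set a := (oblQ (k + 1) m).eval x
  set b := (oblQ k m).eval x
  have hmk : (m : ℝ) ≤ k := by exact_mod_cast hm
  have hm0 : (0 : ℝ) ≤ m := by positivity
  have hS : (m : ℝ) ^ 2 / ((k : ℝ) + 1) ^ 2 ≤ 1 := by
    rw [div_le_one (by positivity)]; gcongr; linarith
  have hs : Real.sqrt (1 + x ^ 2 - (m : ℝ) ^ 2 / ((k : ℝ) + 1) ^ 2) ^ 2 = _ :=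
    Real.sq_sqrt (by nlinarith [sq_nonneg x])
  have hs0 := Real.sqrt_nonneg (1 + x ^ 2 - (m : ℝ) ^ 2 / ((k : ℝ) + 1) ^ 2)
  set s := Real.sqrt (1 + x ^ 2 - (m : ℝ) ^ 2 / ((k : ℝ) + 1) ^ 2)
  have hT : (((k : ℝ) + 1) * s) ^ 2 = ((k : ℝ) + 1) ^ 2 * (1 + x ^ 2) - m ^ 2 := by
    rw [mul_pow, hs]; field_simp
  rw [← mul_div_assoc, lt_div_iff₀ ha, hrec]
  rw [← mul_div_assoc, div_lt_iff₀ hb] at hodd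
  set N : ℝ := (k : ℝ) + 1
  have hN : 0 < N := by positivity
  set T := N * s
  have hT0 : 0 ≤ T := by positivity
  have hd : (0 : ℝ) < N - m := by simp only [N]; linarith
  have hgap : (T - N * x) * (T + N * x) = (N - m) * (N + m) := by linear_combination hT
  have hsum : 0 < T + N * x := by positivity
  have hTpos : 0 < T - N * x := by
    by_contra hcon
    have : 0 < (N - m) * (N + m) := by positivity
    nlinarith
  have hfin : (T - N * x) * a < (N + m) * b := by
    have h5 := mul_lt_mul_of_pos_left hodd hTpos
    have h6 : (N - m) * ((T - N * x) * a) < (N - m) * ((N + m) * b) := by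
      have e : (T - N * x) * (N * (x + s) * b) = (N - m) * (N + m) * b := by
        rw [← hgap]; simp only [T]; ring
      linarith
    exact lt_of_mul_lt_mul_left h6 hd.le
  have e2 : (k : ℝ) + 2 = N + 1 := by simp only [N]; ring
  rw [e2]
  nlinarith

/-- For `x > 0` and integers `n > m ≥ 0`: if `n - m` is odd
then `0 < -i Pₙᵐ(ix)/Pₙ₋₁ᵐ(ix) < (n/(n-m)) (x + √(1+x²-m²/n²))`; if `n - m`
is even then `-i Pₙᵐ(ix)/Pₙ₋₁ᵐ(ix) > (1/(n-m))(n x + (n-1)√(1+x²-m²/(n-1)²))`. -/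
theorem oblate_legendre_P_ratio_bounds (n m : ℕ) (hnm : m < n) (x : ℝ)
    (hx : 0 < x) :
    (Odd (n - m) →
      ∃ r : ℝ, -Complex.I * assocLegendreP n m (Complex.I * x) /
          assocLegendreP (n - 1) m (Complex.I * x) = (r : ℂ) ∧ 0 < r ∧
        r < (n : ℝ) / ((n : ℝ) - (m : ℝ)) *
          (x + Real.sqrt (1 + x ^ 2 - (m : ℝ) ^ 2 / (n : ℝ) ^ 2))) ∧
    (Even (n - m) →
      ∃ r : ℝ, -Complex.I * assocLegendreP n m (Complex.I * x) /
          assocLegendreP (n - 1) m (Complex.I * x) = (r : ℂ) ∧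
        1 / ((n : ℝ) - (m : ℝ)) *
          ((n : ℝ) * x + ((n : ℝ) - 1) *
            Real.sqrt (1 + x ^ 2 - (m : ℝ) ^ 2 / ((n : ℝ) - 1) ^ 2)) < r) := by
  obtain ⟨k, rfl⟩ : ∃ k, n = k + 1 := ⟨n - 1, by omega⟩
  have hmk : m ≤ k := by omega
  have hmk' : (m : ℝ) ≤ k := by exact_mod_cast hmk
  have hd : (0 : ℝ) < (k : ℝ) + 1 - m := by linarith
  simp only [Nat.add_sub_cancel]
  push_cast
  refine ⟨fun ho => ⟨_, obl_ratio k m hmk x hx, ?_, ?_⟩, fun he => ⟨_, obl_ratio k m hmk x hx, ?_⟩⟩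
  · exact div_pos ((obl_pos x hx (k + 1) m).2 (by omega)) ((obl_pos x hx k m).2 hmk)
  · have ho' : Odd (k + 1 + m) := by grind
    have h := obl_odd k m hmk ho' x hx
    rw [div_mul_eq_mul_div, lt_div_iff₀ hd]
    linarith
  · obtain ⟨j, rfl⟩ : ∃ j, k = j + 1 := ⟨k - 1, by grind⟩
    have hj : m ≤ j := by grind
    have ho' : Odd (j + 1 + m) := by grind
    have h := obl_even j m hj ho' x hx
    rw [div_mul_eq_mul_div, one_mul, div_lt_iff₀ hd]
    push_cast
    rw [show (j : ℝ) + 1 + 1 - 1 = j + 1 by ring, show (j : ℝ) + 1 + 1 = j + 2 by ring]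
    rw [mul_comm (_ / _)]
    exact h
end

section
/- For any α > -1, ν > 0 and x > 0: L_{ν+1}^{α-1}(-x)/L_ν^{α}(-x) > (α + x - 1 + sqrt((α+x+1)² + 4νx))/(2(ν+1)). -/
/-- The generalized Laguerre function `L_ν^{(α)}(x)` for real `ν, α`, defined
through the (entire, reciprocal-Gamma regularized) Kummer series
`L_ν^{(α)}(x) = (Γ(ν+α+1)/Γ(ν+1)) Σ_k (-ν)_k x^k / (Γ(α+1+k) k!)`,
which for nonnegative integer `ν` is the Laguerre polynomial `L_n^{(α)}`. -/
noncomputable def lagL (ν α x : ℝ) : ℝ :=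
  (Real.Gamma (ν + α + 1) / Real.Gamma (ν + 1)) *
    ∑' k : ℕ, (∏ j ∈ Finset.range k, ((j : ℝ) - ν)) * x ^ k /
      (Real.Gamma (α + 1 + k) * (Nat.factorial k : ℝ))

/-- Reciprocal Gamma recursion, valid everywhere. -/
theorem lagAux_g (s : ℝ) : (Real.Gamma s)⁻¹ = s * (Real.Gamma (s + 1))⁻¹ := by
  by_cases hs : s = 0
  · subst hs; simp
  · rw [Real.Gamma_add_one hs, mul_inv, ← mul_assoc, mul_inv_cancel₀ hs, one_mul]

noncomputable def lagF (ν a x : ℝ) (k : ℕ) : ℝ :=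
  (∏ j ∈ Finset.range k, (ν - (j : ℝ))) * (Real.Gamma (a + k))⁻¹ * (x ^ k / (k.factorial : ℝ))

noncomputable def lagT (ν a x : ℝ) (n : ℕ) : ℝ :=
  (∏ j ∈ Finset.range n, (a + ν + (j : ℝ))) * (Real.Gamma (a + n))⁻¹ *
    (x ^ n / (n.factorial : ℝ))

theorem lagAux_vander (n : ℕ) : ∀ ν a : ℝ,
    ∑ p ∈ Finset.HasAntidiagonal.antidiagonal n, (n.choose p.1 : ℝ) *
      ((∏ j ∈ Finset.range p.1, (ν - (j : ℝ))) * (Real.Gamma (a + p.1))⁻¹) =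
    (∏ j ∈ Finset.range n, (a + ν + (j : ℝ))) * (Real.Gamma (a + n))⁻¹ := by
  induction n with
  | zero => intro ν a; simp
  | succ n ih =>
    intro ν a
    rw [Finset.sum_antidiagonal_choose_succ_mul
      (fun i _ => (∏ j ∈ Finset.range i, (ν - (j : ℝ))) * (Real.Gamma (a + i))⁻¹) n]
    have h2 : ∑ p ∈ Finset.HasAntidiagonal.antidiagonal n, (n.choose p.2 : ℝ) *
        ((∏ j ∈ Finset.range (p.1 + 1), (ν - (j : ℝ))) *
          (Real.Gamma (a + ((p.1 + 1 : ℕ) : ℝ)))⁻¹) =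
        ν * ∑ p ∈ Finset.HasAntidiagonal.antidiagonal n, (n.choose p.1 : ℝ) *
      ((∏ j ∈ Finset.range p.1, ((ν - 1) - (j : ℝ))) * (Real.Gamma ((a + 1) + p.1))⁻¹) := by
      rw [Finset.mul_sum]
      refine Finset.sum_congr rfl fun p hp => ?_
      have hp' := Finset.HasAntidiagonal.mem_antidiagonal.mp hp
      have hc : n.choose p.2 = n.choose p.1 := by
        rw [← hp', Nat.choose_symm_add]
      have hpr : ∏ j ∈ Finset.range (p.1 + 1), (ν - (j : ℝ)) =
          ν * ∏ j ∈ Finset.range p.1, ((ν - 1) - (j : ℝ)) := by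
        rw [Finset.prod_range_succ', mul_comm]
        congr 1
        · simp
        · refine Finset.prod_congr rfl fun j _ => ?_
          push_cast; ring
      have hg : a + ((p.1 + 1 : ℕ) : ℝ) = (a + 1) + p.1 := by push_cast; ring
      rw [hc, hpr, hg]; ring
    have e1 : a + 1 + (ν - 1) = a + ν := by ring
    have e2 : a + 1 + (n : ℝ) = a + n + 1 := by ring
    have e3 : a + ((n + 1 : ℕ) : ℝ) = a + n + 1 := by push_cast; ring
    rw [h2, ih ν a, ih (ν - 1) (a + 1), e1, e2, e3, lagAux_g (a + n),
      Finset.prod_range_succ]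
    ring

theorem lagAux_conv (ν a x : ℝ) (n : ℕ) :
    ∑ p ∈ Finset.HasAntidiagonal.antidiagonal n, lagF ν a x p.1 * (x ^ p.2 / (p.2.factorial : ℝ)) =
      lagT ν a x n := by
  unfold lagT
  rw [← lagAux_vander, Finset.sum_mul]
  refine Finset.sum_congr rfl fun p hp => ?_
  have hp' := Finset.HasAntidiagonal.mem_antidiagonal.mp hp
  unfold lagF
  have hc : (n.choose p.1 : ℝ) * (p.1.factorial : ℝ) * (p.2.factorial : ℝ) = n.factorial := by
    have := Nat.choose_mul_factorial_mul_factorial (n := n) (k := p.1) (by omega)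
    have h2 : n - p.1 = p.2 := by omega
    rw [h2] at this
    exact_mod_cast this
  have f1 : (p.1.factorial : ℝ) ≠ 0 := by positivity
  have f2 : (p.2.factorial : ℝ) ≠ 0 := by positivity
  have f3 : (n.choose p.1 : ℝ) ≠ 0 := by
    intro h; rw [h] at hc
    have : (n.factorial : ℝ) ≠ 0 := by positivity
    apply this; rw [← hc]; ring
  rw [← hc, ← hp', pow_add]
  rw [hp']
  field_simp

theorem lagF_summable (ν a x : ℝ) : Summable (fun k => ‖lagF ν a x k‖) := by
  refine summable_of_ratio_norm_eventually_le (r := 1 / 2) (by norm_num) ?_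
  obtain ⟨N, hN⟩ := exists_nat_gt (|ν| + 2 * |a| + 8 * |x| + 8)
  filter_upwards [Filter.eventually_ge_atTop N] with k hk
  have hk' : |ν| + 2 * |a| + 8 * |x| + 8 < (k : ℝ) := lt_of_lt_of_le hN (by exact_mod_cast hk)
  have n1 := abs_nonneg ν
  have n2 := abs_nonneg a
  have n3 := abs_nonneg x
  have ha : (k : ℝ) / 2 ≤ a + k := by
    have := neg_abs_le a; linarith
  have ha0 : 0 < a + k := by linarith
  have key : lagF ν a x (k + 1) * ((a + k) * (k + 1)) = lagF ν a x k * ((ν - k) * x) := by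
    unfold lagF
    rw [lagAux_g (a + k), Finset.prod_range_succ, Nat.factorial_succ]
    have e3 : a + ((k + 1 : ℕ) : ℝ) = a + k + 1 := by push_cast; ring
    rw [e3]
    have f1 : (k.factorial : ℝ) ≠ 0 := by positivity
    push_cast
    field_simp
    ring
  have hkk := congrArg abs key
  simp only [abs_mul] at hkk
  rw [abs_of_pos ha0, abs_of_pos (by positivity : (0 : ℝ) < k + 1)] at hkk
  simp only [Real.norm_eq_abs, abs_abs]
  have hb : |ν - k| * |x| ≤ 1 / 2 * ((a + k) * (k + 1)) := by
    have h1 : |ν - k| ≤ 2 * k := by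
      have := abs_sub ν (k : ℝ)
      rw [Nat.abs_cast] at this
      linarith
    have h2 : |x| ≤ k / 8 := by linarith
    calc |ν - k| * |x| ≤ 2 * k * (k / 8) := by gcongr
      _ = 1 / 2 * (k / 2 * k) := by ring
      _ ≤ _ := by gcongr; linarith
  have hpos : 0 < (a + k) * ((k : ℝ) + 1) := by positivity
  refine le_of_mul_le_mul_right ?_ hpos
  rw [hkk]
  have := mul_le_mul_of_nonneg_left hb (abs_nonneg (lagF ν a x k))
  linarith

theorem lagAux_exp_summable (x : ℝ) : Summable (fun k : ℕ => ‖x ^ k / (k.factorial : ℝ)‖) :=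
  (Real.summable_pow_div_factorial x).norm

theorem lagT_summable (ν a x : ℝ) : Summable (lagT ν a x) := by
  have := (summable_norm_sum_mul_antidiagonal_of_summable_norm (lagF_summable ν a x)
    (lagAux_exp_summable x)).of_norm
  simpa only [lagAux_conv] using this

theorem lagAux_kummer (ν a x : ℝ) :
    (∑' k, lagF ν a x k) * Real.exp x = ∑' n, lagT ν a x n := by
  rw [Real.exp_eq_exp_ℝ, NormedSpace.exp_eq_tsum_div]
  rw [tsum_mul_tsum_eq_tsum_sum_antidiagonal_of_summable_norm (lagF_summable ν a x)
    (lagAux_exp_summable x)]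
  simp only [lagAux_conv]

theorem lagL_eq (ν α x : ℝ) : lagL ν α (-x) =
    (Real.Gamma (ν + α + 1) / Real.Gamma (ν + 1)) * Real.exp (-x) *
      ∑' n, lagT ν (α + 1) x n := by
  rw [← lagAux_kummer]
  unfold lagL
  have : ∀ k : ℕ, (∏ j ∈ Finset.range k, ((j : ℝ) - ν)) * (-x) ^ k /
      (Real.Gamma (α + 1 + k) * (Nat.factorial k : ℝ)) = lagF ν (α + 1) x k := by
    intro k
    unfold lagF
    have h : (∏ j ∈ Finset.range k, ((j : ℝ) - ν)) * (-x) ^ k =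
        (∏ j ∈ Finset.range k, (ν - (j : ℝ))) * x ^ k := by
      rw [← Finset.card_range k, ← Finset.prod_const, ← Finset.prod_const, Finset.card_range,
        ← Finset.prod_mul_distrib, ← Finset.prod_mul_distrib]
      exact Finset.prod_congr rfl fun j _ => by ring
    rw [h, div_eq_mul_inv, mul_inv]; ring
  rw [tsum_congr this]
  have he : Real.exp (-x) * Real.exp x = 1 := by rw [← Real.exp_add]; simp
  calc _ = Real.Gamma (ν + α + 1) / Real.Gamma (ν + 1) * (∑' k, lagF ν (α + 1) x k) *
        (Real.exp (-x) * Real.exp x) := by rw [he, mul_one]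
    _ = _ := by ring

theorem lagT_shift (ν α x : ℝ) (n : ℕ) :
    lagT (ν + 1) α x n = (α + n) * lagT ν (α + 1) x n := by
  unfold lagT
  rw [lagAux_g (α + n)]
  have e1 : α + (ν + 1) = α + 1 + ν := by ring
  have e2 : α + n + 1 = α + 1 + (n : ℝ) := by ring
  rw [e1, e2]; ring

theorem lagT_pos (ν a x : ℝ) (ha : 0 < a) (hν : 0 < ν) (hx : 0 < x) (n : ℕ) :
    0 < lagT ν a x n := by
  unfold lagT
  have : 0 < Real.Gamma (a + n) := Real.Gamma_pos_of_pos (by positivity)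
  have : 0 < ∏ j ∈ Finset.range n, (a + ν + (j : ℝ)) :=
    Finset.prod_pos fun j _ => by positivity
  positivity

theorem lagT_rec (ν a x : ℝ) (ha : 0 < a) (n : ℕ) :
    ((n + 1 : ℕ) : ℝ) * lagT ν a x (n + 1) =
      x * lagT ν a x n + x * ν * (lagT ν a x n / (a + n)) := by
  unfold lagT
  have h : a + (n : ℝ) ≠ 0 := by positivity
  have e3 : a + ((n + 1 : ℕ) : ℝ) = a + n + 1 := by push_cast; ring
  have f1 : (n.factorial : ℝ) ≠ 0 := by positivity
  rw [lagAux_g (a + n), Finset.prod_range_succ, Nat.factorial_succ, e3]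
  push_cast
  field_simp
  ring

/-- For `α > -1`, `ν > 0` and `x > 0`:
`L_{ν+1}^{α-1}(-x)/L_ν^{α}(-x) > (α + x - 1 + √((α+x+1)² + 4νx))/(2(ν+1))`. -/
theorem laguerre_neg_arg_ratio_lower (α ν x : ℝ) (hα : -1 < α) (hν : 0 < ν)
    (hx : 0 < x) :
    (α + x - 1 + Real.sqrt ((α + x + 1) ^ 2 + 4 * ν * x)) / (2 * (ν + 1)) <
      lagL (ν + 1) (α - 1) (-x) / lagL ν α (-x) := by
  have ha : 0 < α + 1 := by linarith
  set t : ℕ → ℝ := lagT ν (α + 1) x with ht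
  have tpos : ∀ n, 0 < t n := lagT_pos ν (α + 1) x ha hν hx
  have st : Summable t := lagT_summable _ _ _
  have sP : Summable (fun n : ℕ => (α + n) * t n) := by
    have := lagT_summable (ν + 1) α x
    refine this.congr fun n => ?_
    rw [lagT_shift]
  have sE : Summable (fun n : ℕ => (n : ℝ) * t n) := by
    refine (sP.sub (st.mul_left α)).congr fun n => ?_
    ring
  have sQ : Summable (fun n : ℕ => t n / (α + 1 + n)) := by
    refine Summable.of_nonneg_of_le (fun n => ?_) (fun n => ?_) (st.mul_left (α + 1)⁻¹)
    · have := tpos n; positivity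
    · rw [div_eq_mul_inv, mul_comm]
      have := (tpos n).le
      refine mul_le_mul_of_nonneg_right ?_ this
      refine inv_anti₀ ha ?_
      have : (0 : ℝ) ≤ n := by positivity
      linarith
  set T := ∑' n, t n with hT
  set E := ∑' n : ℕ, (n : ℝ) * t n with hE
  set Q := ∑' n : ℕ, t n / (α + 1 + n) with hQ
  have Tpos : 0 < T := st.tsum_pos (fun n => (tpos n).le) 0 (tpos 0)
  have Qpos : 0 < Q := sQ.tsum_pos (fun n => by have := tpos n; positivity) 0
    (by have := tpos 0; positivity)
  have hPE : ∑' n, lagT (ν + 1) α x n = α * T + E := by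
    rw [hT, hE, ← tsum_mul_left, ← (st.mul_left α).tsum_add sE]
    refine tsum_congr fun n => ?_
    rw [lagT_shift]; ring
  have hErec : E = x * T + x * ν * Q := by
    rw [hE, sE.tsum_eq_zero_add, hT, hQ, ← tsum_mul_left, ← tsum_mul_left,
      ← (st.mul_left x).tsum_add (sQ.mul_left (x * ν))]
    simp only [Nat.cast_zero, zero_mul, zero_add]
    exact tsum_congr fun n => lagT_rec ν (α + 1) x ha n
  have hCS : T ^ 2 < Q * ((α + 1) * T + E) := by
    set l := T / Q with hl
    have hterm : ∀ n : ℕ, t n * (α + 1 + n - l) ^ 2 / (α + 1 + n) =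
        (α + 1) * t n + n * t n - 2 * l * t n + l ^ 2 * (t n / (α + 1 + n)) := by
      intro n
      have : α + 1 + (n : ℝ) ≠ 0 := by positivity
      field_simp
      ring
    have s1 := (st.mul_left (α + 1)).add sE
    have s2 := s1.sub (st.mul_left (2 * l))
    have s3 := s2.add (sQ.mul_left (l ^ 2))
    have hsum : ∑' n : ℕ, t n * (α + 1 + n - l) ^ 2 / (α + 1 + n) =
        (α + 1) * T + E - 2 * l * T + l ^ 2 * Q := by
      rw [tsum_congr hterm, s2.tsum_add (sQ.mul_left (l ^ 2)), s1.tsum_sub (st.mul_left (2 * l)),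
        (st.mul_left (α + 1)).tsum_add sE, tsum_mul_left, tsum_mul_left, tsum_mul_left]
    have s4 : Summable (fun n : ℕ => t n * (α + 1 + n - l) ^ 2 / (α + 1 + n)) :=
      s3.congr fun n => (hterm n).symm
    have hpos : 0 < ∑' n : ℕ, t n * (α + 1 + n - l) ^ 2 / (α + 1 + n) := by
      have hnn : ∀ n : ℕ, 0 ≤ t n * (α + 1 + n - l) ^ 2 / (α + 1 + n) := fun n => by
        have := tpos n; positivity
      have hp : ∀ n : ℕ, α + 1 + n - l ≠ 0 →
          0 < t n * (α + 1 + n - l) ^ 2 / (α + 1 + n) := fun n hn => by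
        have := tpos n; positivity
      by_cases h0 : α + 1 + ((0 : ℕ) : ℝ) - l = 0
      · refine s4.tsum_pos hnn 1 (hp 1 ?_)
        push_cast at h0 ⊢
        intro h; linarith
      · exact s4.tsum_pos hnn 0 (hp 0 h0)
    rw [hsum] at hpos
    have h5 := mul_pos Qpos hpos
    have h6 : l * Q = T := by rw [hl]; field_simp
    have h7 : Q * ((α + 1) * T + E - 2 * l * T + l ^ 2 * Q) =
      Q * ((α + 1) * T + E) - T ^ 2 := by rw [← h6]; ring
    linarith
  have hG1 : 0 < Real.Gamma (ν + α + 1) := Real.Gamma_pos_of_pos (by linarith)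
  have hG2 : 0 < Real.Gamma (ν + 1) := Real.Gamma_pos_of_pos (by linarith)
  have hratio : lagL (ν + 1) (α - 1) (-x) / lagL ν α (-x) = (α + E / T) / (ν + 1) := by
    rw [lagL_eq, lagL_eq, sub_add_cancel, hPE]
    have e1 : ν + 1 + (α - 1) + 1 = ν + α + 1 := by ring
    rw [e1, Real.Gamma_add_one (by positivity : ν + 1 ≠ 0), ← ht, ← hT]
    have := Real.exp_pos (-x)
    field_simp
  rw [hratio, div_lt_div_iff₀ (by positivity) (by positivity)]
  obtain ⟨q, hq⟩ : ∃ q, q = Q / T := ⟨_, rfl⟩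
  have hq0 : 0 < q := by rw [hq]; positivity
  have hET : E / T = x + x * ν * q := by rw [hq, hErec]; field_simp
  have hq2 : 1 < q * (α + 1 + (x + x * ν * q)) := by
    rw [← hET, hq]
    have : Q / T * (α + 1 + E / T) = Q * ((α + 1) * T + E) / T ^ 2 := by field_simp
    rw [this, one_lt_div (by positivity)]
    exact hCS
  rw [hET]
  have hsq : Real.sqrt ((α + x + 1) ^ 2 + 4 * ν * x) < α + x + 1 + 2 * (x * ν * q) := by
    rw [Real.sqrt_lt' (by have : 0 < x * ν * q := by positivity
                          linarith)]
    have := mul_lt_mul_of_pos_left hq2 (by positivity : 0 < 4 * ν * x)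
    nlinarith [this]
  have := mul_lt_mul_of_pos_right hsq (by positivity : 0 < ν + 1)
  nlinarith [this]
end
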